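/- Under the hypotheses of the convergence of geometries theorem ({f_i} C^{1+α} contractions on B_ρ(0) fixing 0, with bounded C^{1+α} norms, derivative norms in (μ′,μ), and bunching κ·μ^α < 1 at every point of the orbit), there exists C > 1 such that for all x, y ∈ B_ρ(0) and all n ≥ 1: C⁻¹ < ‖Df^n(x)‖_op / ‖Df^n(y)‖_op < C, C⁻¹ < m(Df^n(x)) / m(Df^n(y)) < C, and C⁻¹ < det Df^n(x) / det Df^n(y) < C. Moreover these ratios tend to 1 as |x − y| → 0, uniformly in n. -/

import Mathlib

open Metric Set

noncomputable section

variable {d : ℕ}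

/-- `comps f n = f n ∘ ⋯ ∘ f 1` (and `comps f 0 = id`). -/
def comps (f : ℕ → EuclideanSpace ℝ (Fin d) → EuclideanSpace ℝ (Fin d)) :
    ℕ → EuclideanSpace ℝ (Fin d) → EuclideanSpace ℝ (Fin d)
  | 0 => id
  | n + 1 => f (n + 1) ∘ comps f n

/-- The co-norm `m(T) = inf_{‖v‖=1} ‖T v‖` of a continuous linear map. -/
def conorm (T : EuclideanSpace ℝ (Fin d) →L[ℝ] EuclideanSpace ℝ (Fin d)) : ℝ :=
  sInf {r | ∃ v : EuclideanSpace ℝ (Fin d), ‖v‖ = 1 ∧ r = ‖T v‖}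

/-!
Write `B = Df^n(y)`, `A = Df^n(x)` and let `b`, `a` be the derivatives of the next map at the
`n`-th points of the two orbits. Then
`(bB)⁻¹ (aA) = B⁻¹ (1 + b⁻¹(a - b)) B · B⁻¹A`,
so passing from `n` to `n + 1` multiplies `‖B⁻¹A‖` by at most `1 + cond(B) ‖b⁻¹‖ ‖a - b‖`.
Conjugation by `B` costs `cond(B) ≤ κ^n`, while contraction and Hölder continuity give
`‖a - b‖ ≲ (μ^α)^n |x - y|^α`; bunching makes the product `(κ μ^α)^n` summable. Hence
`‖B⁻¹A‖ ≤ exp (M |x - y|^α)` uniformly in `n`, and since `A = B · B⁻¹A` this controls the norm, the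
co-norm and the determinant at once. The signs of the determinants agree because the determinant of
each derivative is continuous and nowhere zero on a connected set.
-/

open Finset NNReal

section Real

theorem div_mem_Icc_exp {a b t : ℝ} (hb : 0 < b) (hab : a ≤ Real.exp t * b)
    (hba : b ≤ Real.exp t * a) : a / b ∈ Icc (Real.exp (-t)) (Real.exp t) := by
  refine ⟨?_, (div_le_iff₀ hb).2 hab⟩
  rwa [Real.exp_neg, inv_le_iff_one_le_mul₀' (Real.exp_pos t), ← mul_div_assoc, one_le_div hb]

theorem mem_Ioo_exp_of_mem_Icc_exp {r t T : ℝ} (hr : r ∈ Icc (Real.exp (-t)) (Real.exp t))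
    (htT : t < T) : r ∈ Ioo (Real.exp T)⁻¹ (Real.exp T) := by
  rw [← Real.exp_neg]
  exact ⟨(Real.exp_lt_exp.2 (neg_lt_neg htT)).trans_le hr.1,
    hr.2.trans_lt (Real.exp_lt_exp.2 htT)⟩

theorem abs_sub_one_le_exp_sub_one {r t : ℝ} (hr : r ∈ Icc (Real.exp (-t)) (Real.exp t)) :
    |r - 1| ≤ Real.exp t - 1 := by
  rw [abs_le]
  constructor <;> linarith [hr.1, hr.2, Real.add_one_le_exp t, Real.add_one_le_exp (-t)]

theorem exists_pos_forall_exp_mul_rpow_sub_one_le (M : ℝ) {α ε : ℝ} (hα : 0 < α) (hε : 0 < ε) :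
    ∃ δ > 0, ∀ t, 0 ≤ t → t < δ → Real.exp (M * t ^ α) - 1 ≤ ε := by
  have hcont : Continuous fun t : ℝ => Real.exp (M * t ^ α) :=
    Real.continuous_exp.comp (continuous_const.mul (Real.continuous_rpow_const hα.le))
  obtain ⟨δ, hδ, hclose⟩ := Metric.continuous_iff.1 hcont 0 ε hε
  refine ⟨δ, hδ, fun t ht htδ => ?_⟩
  have hdist := hclose t (by rwa [Real.dist_0_eq_abs, abs_of_nonneg ht])
  rw [Real.zero_rpow hα.ne', mul_zero, Real.exp_zero, Real.dist_eq] at hdist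
  exact (le_abs_self _).trans hdist.le

theorem div_pos_of_continuousOn_of_isPreconnected {X : Type*} [TopologicalSpace X] {s : Set X}
    {g : X → ℝ} (hs : IsPreconnected s) (hg : ContinuousOn g s) (hg0 : ∀ z ∈ s, g z ≠ 0)
    {x y : X} (hx : x ∈ s) (hy : y ∈ s) : 0 < g x / g y := by
  by_contra! hneg
  have hzero : (0 : ℝ) ∈ g '' s := by
    rcases div_nonpos_iff.1 hneg with hsign | hsign
    · exact hs.intermediate_value hy hx hg ⟨hsign.2, hsign.1⟩
    · exact hs.intermediate_value hx hy hg hsign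
  obtain ⟨z, hz, hz0⟩ := hzero
  exact hg0 z hz hz0

theorem holderOnWith_of_dist_le {X Y : Type*} [PseudoMetricSpace X] [PseudoMetricSpace Y]
    {C r : ℝ≥0} {g : X → Y} {s : Set X}
    (hg : ∀ x ∈ s, ∀ y ∈ s, dist (g x) (g y) ≤ C * dist x y ^ (r : ℝ)) : HolderOnWith C r g s := by
  intro x hx y hy
  rw [edist_nndist, edist_nndist, ← ENNReal.coe_rpow_of_nonneg _ r.coe_nonneg]
  exact_mod_cast hg x hx y hy

end Real

section Operator

variable {𝕜 E F G : Type*} [NontriviallyNormedField 𝕜] [NormedAddCommGroup E] [NormedSpace 𝕜 E]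
  [NormedAddCommGroup F] [NormedSpace 𝕜 F] [NormedAddCommGroup G] [NormedSpace 𝕜 G]

/-- The condition number `‖T‖ ‖T⁻¹‖`, the quantity bounded by the bunching condition. It is `0` when
`T` is not invertible, since `T.inverse` is then `0`. -/
def conditionNumber (T : E →L[𝕜] F) : ℝ :=
  ‖T‖ * ‖T.inverse‖

theorem conditionNumber_nonneg (T : E →L[𝕜] F) : 0 ≤ conditionNumber T :=
  mul_nonneg (norm_nonneg _) (norm_nonneg _)

theorem conditionNumber_id_le_one : conditionNumber (ContinuousLinearMap.id 𝕜 E) ≤ 1 := by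
  rw [conditionNumber, ContinuousLinearMap.inverse_id]
  exact mul_le_one₀ ContinuousLinearMap.norm_id_le (norm_nonneg _) ContinuousLinearMap.norm_id_le

theorem conditionNumber_comp_le {S : F →L[𝕜] G} (hS : S.IsInvertible) (T : E →L[𝕜] F) :
    conditionNumber (S ∘L T) ≤ conditionNumber S * conditionNumber T := by
  unfold conditionNumber
  rw [hS.inverse_comp_of_left]
  calc ‖S ∘L T‖ * ‖T.inverse ∘L S.inverse‖
      ≤ (‖S‖ * ‖T‖) * (‖T.inverse‖ * ‖S.inverse‖) := by
        gcongr <;> exact ContinuousLinearMap.opNorm_comp_le _ _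
    _ = ‖S‖ * ‖S.inverse‖ * (‖T‖ * ‖T.inverse‖) := by ring

theorem comp_inverse_comp_self {B : E →L[𝕜] F} (hB : B.IsInvertible) (A : G →L[𝕜] F) :
    B ∘L (B.inverse ∘L A) = A := by
  rw [← ContinuousLinearMap.comp_assoc, hB.self_comp_inverse, ContinuousLinearMap.id_comp]

theorem norm_le_norm_inverse_comp_mul_norm {B : E →L[𝕜] F} (hB : B.IsInvertible)
    (A : G →L[𝕜] F) : ‖A‖ ≤ ‖B.inverse ∘L A‖ * ‖B‖ :=
  calc ‖A‖ = ‖B ∘L (B.inverse ∘L A)‖ := by rw [comp_inverse_comp_self hB]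
    _ ≤ ‖B‖ * ‖B.inverse ∘L A‖ := ContinuousLinearMap.opNorm_comp_le _ _
    _ = ‖B.inverse ∘L A‖ * ‖B‖ := mul_comm _ _

theorem inverse_comp_comp_eq {b : F →L[𝕜] G} {B : E →L[𝕜] F} (hb : b.IsInvertible)
    (hB : B.IsInvertible) (a : F →L[𝕜] G) (A : E →L[𝕜] F) :
    (b ∘L B).inverse ∘L (a ∘L A) =
      (.id 𝕜 E + B.inverse ∘L (b.inverse ∘L (a - b)) ∘L B) ∘L (B.inverse ∘L A) := by
  rw [hb.inverse_comp_of_left]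
  ext v
  simp [hB.self_apply_inverse, hb.inverse_apply_self]

theorem norm_inverse_comp_comp_le {b : F →L[𝕜] G} {B : E →L[𝕜] F} (hb : b.IsInvertible)
    (hB : B.IsInvertible) (a : F →L[𝕜] G) (A : E →L[𝕜] F) :
    ‖(b ∘L B).inverse ∘L (a ∘L A)‖ ≤
      (1 + conditionNumber B * (‖b.inverse‖ * ‖a - b‖)) * ‖B.inverse ∘L A‖ := by
  have hconj : ‖B.inverse ∘L (b.inverse ∘L (a - b)) ∘L B‖ ≤
      conditionNumber B * (‖b.inverse‖ * ‖a - b‖) :=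
    calc ‖B.inverse ∘L (b.inverse ∘L (a - b)) ∘L B‖
        ≤ ‖B.inverse‖ * ‖(b.inverse ∘L (a - b)) ∘L B‖ := ContinuousLinearMap.opNorm_comp_le _ _
      _ ≤ ‖B.inverse‖ * (‖b.inverse ∘L (a - b)‖ * ‖B‖) := by
          gcongr
          exact ContinuousLinearMap.opNorm_comp_le _ _
      _ ≤ ‖B.inverse‖ * ((‖b.inverse‖ * ‖a - b‖) * ‖B‖) := by
          gcongr
          exact ContinuousLinearMap.opNorm_comp_le _ _
      _ = conditionNumber B * (‖b.inverse‖ * ‖a - b‖) := by rw [conditionNumber]; ring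
  rw [inverse_comp_comp_eq hb hB]
  refine (ContinuousLinearMap.opNorm_comp_le _ _).trans ?_
  gcongr
  exact norm_add_le_of_le ContinuousLinearMap.norm_id_le hconj

/-- The product `a (n - 1) ∘ ⋯ ∘ a 0` of a sequence of operators, modelling the derivative of an
iterated composition. -/
def operatorProd (a : ℕ → E →L[𝕜] E) : ℕ → E →L[𝕜] E
  | 0 => .id 𝕜 E
  | n + 1 => a n ∘L operatorProd a n

theorem isInvertible_operatorProd {b : ℕ → E →L[𝕜] E} (hb : ∀ i, (b i).IsInvertible) (n : ℕ) :
    (operatorProd b n).IsInvertible := by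
  induction n with
  | zero => exact ContinuousLinearMap.isInvertible_equiv (f := .refl 𝕜 E)
  | succ n ih => exact (hb n).comp ih

theorem conditionNumber_operatorProd_le {b : ℕ → E →L[𝕜] E} {κ : ℝ}
    (hb : ∀ i, (b i).IsInvertible) (hκ : ∀ i, conditionNumber (b i) ≤ κ) (n : ℕ) :
    conditionNumber (operatorProd b n) ≤ κ ^ n := by
  induction n with
  | zero => exact conditionNumber_id_le_one.trans_eq (pow_zero κ).symm
  | succ n ih =>
    rw [pow_succ']
    exact (conditionNumber_comp_le (hb n) _).trans <|
      mul_le_mul (hκ n) ih (conditionNumber_nonneg _) ((conditionNumber_nonneg _).trans (hκ n))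

theorem norm_inverse_comp_operatorProd_le {b : ℕ → E →L[𝕜] E} (hb : ∀ i, (b i).IsInvertible)
    (a : ℕ → E →L[𝕜] E) (n : ℕ) :
    ‖(operatorProd b n).inverse ∘L operatorProd a n‖ ≤
      Real.exp (∑ i ∈ range n,
        conditionNumber (operatorProd b i) * (‖(b i).inverse‖ * ‖a i - b i‖)) := by
  induction n with
  | zero => simpa [operatorProd] using ContinuousLinearMap.norm_id_le
  | succ n ih =>
    rw [sum_range_succ_comm, Real.exp_add]
    have hfactor := Real.add_one_le_exp
      (conditionNumber (operatorProd b n) * (‖(b n).inverse‖ * ‖a n - b n‖))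
    rw [add_comm] at hfactor
    exact (norm_inverse_comp_comp_le (hb n) (isInvertible_operatorProd hb n) _ _).trans
      (mul_le_mul hfactor ih (norm_nonneg _) (Real.exp_pos _).le)

end Operator

section Conorm

variable {E F : Type*} [NormedAddCommGroup E] [NormedSpace ℝ E] [NormedAddCommGroup F]
  [NormedSpace ℝ F]

/-- The co-norm `inf_{‖v‖ = 1} ‖T v‖` of an operator between arbitrary real normed spaces. It is
`0` when the domain is trivial, as the infimum is then over the empty set. -/
def operatorConorm (T : E →L[ℝ] F) : ℝ :=
  sInf {r | ∃ v : E, ‖v‖ = 1 ∧ r = ‖T v‖}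

theorem operatorConorm_mul_norm_le (T : E →L[ℝ] F) (v : E) : operatorConorm T * ‖v‖ ≤ ‖T v‖ := by
  rcases eq_or_ne v 0 with rfl | hv
  · simp
  have hbdd : BddBelow {r | ∃ v : E, ‖v‖ = 1 ∧ r = ‖T v‖} :=
    ⟨0, by rintro _ ⟨w, -, rfl⟩; exact norm_nonneg _⟩
  have hle : operatorConorm T ≤ ‖T (‖v‖⁻¹ • v)‖ :=
    csInf_le hbdd ⟨_, norm_smul_inv_norm (𝕜 := ℝ) hv, rfl⟩
  rwa [map_smul, norm_smul, norm_inv, norm_norm, inv_mul_eq_div,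
    le_div_iff₀ (norm_pos_iff.2 hv)] at hle

variable [Nontrivial E]

theorem norm_inverse_pos {T : E →L[ℝ] F} (hT : T.IsInvertible) : 0 < ‖T.inverse‖ := by
  obtain ⟨e, rfl⟩ := hT
  have := e.symm.toEquiv.nontrivial
  simpa using e.symm.norm_pos

theorem operatorConorm_eq_inv_norm_inverse {T : E →L[ℝ] F} (hT : T.IsInvertible) :
    operatorConorm T = ‖T.inverse‖⁻¹ := by
  have hpos := norm_inverse_pos hT
  have hge : ‖T.inverse‖⁻¹ ≤ operatorConorm T := by
    obtain ⟨v₀, hv₀⟩ := exists_norm_eq E zero_le_one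
    refine le_csInf ⟨_, v₀, hv₀, rfl⟩ ?_
    rintro _ ⟨v, hv, rfl⟩
    rw [inv_le_iff_one_le_mul₀' hpos, ← hv]
    simpa only [hT.inverse_apply_self] using T.inverse.le_opNorm (T v)
  refine le_antisymm ?_ hge
  have hconorm : 0 < operatorConorm T := (inv_pos.2 hpos).trans_le hge
  refine le_inv_of_le_inv₀ hpos ?_
  refine T.inverse.opNorm_le_bound (inv_nonneg.2 hconorm.le) fun w => ?_
  rw [le_inv_mul_iff₀ hconorm]
  simpa only [hT.self_apply_inverse] using operatorConorm_mul_norm_le T (T.inverse w)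

theorem operatorConorm_pos {T : E →L[ℝ] F} (hT : T.IsInvertible) : 0 < operatorConorm T := by
  rw [operatorConorm_eq_inv_norm_inverse hT]
  exact inv_pos.2 (norm_inverse_pos hT)

theorem operatorConorm_le_norm_inverse_comp_mul {A B : E →L[ℝ] F} (hA : A.IsInvertible)
    (hB : B.IsInvertible) :
    operatorConorm A ≤ ‖B.inverse ∘L A‖ * operatorConorm B := by
  rw [operatorConorm_eq_inv_norm_inverse hA, operatorConorm_eq_inv_norm_inverse hB,
    ← div_eq_mul_inv, le_div_iff₀ (norm_inverse_pos hB), inv_mul_le_iff₀ (norm_inverse_pos hA),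
    mul_comm]
  calc ‖B.inverse‖ = ‖(B.inverse ∘L A) ∘L A.inverse‖ := by
        rw [ContinuousLinearMap.comp_assoc, hA.self_comp_inverse, ContinuousLinearMap.comp_id]
    _ ≤ ‖B.inverse ∘L A‖ * ‖A.inverse‖ := ContinuousLinearMap.opNorm_comp_le _ _

end Conorm

section Det

variable {E : Type*} [NormedAddCommGroup E] [NormedSpace ℝ E]

theorem det_comp_eq_mul (S T : E →L[ℝ] E) : (S ∘L T).det = S.det * T.det :=
  LinearMap.det_comp _ _

theorem det_operatorProd (a : ℕ → E →L[ℝ] E) (n : ℕ) :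
    (operatorProd a n).det = ∏ i ∈ range n, (a i).det := by
  induction n with
  | zero => exact LinearMap.det_id
  | succ n ih => rw [prod_range_succ_comm, ← ih, operatorProd, det_comp_eq_mul]

theorem det_ne_zero_of_isInvertible {T : E →L[ℝ] E} (hT : T.IsInvertible) : T.det ≠ 0 := by
  obtain ⟨e, rfl⟩ := hT
  exact e.toLinearEquiv.isUnit_det'.ne_zero

variable [FiniteDimensional ℝ E]

-- Compare the Haar measures of the unit ball and of its image, which lies in the ball of radius
-- `‖T‖`.
theorem abs_det_le_norm_pow_finrank (T : E →L[ℝ] E) : |T.det| ≤ ‖T‖ ^ Module.finrank ℝ E := by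
  borelize E
  let ν : MeasureTheory.Measure E := MeasureTheory.Measure.addHaar
  have himage : T '' closedBall 0 1 ⊆ closedBall 0 ‖T‖ := by
    rintro _ ⟨v, hv, rfl⟩
    rw [mem_closedBall_zero_iff] at hv ⊢
    exact T.le_of_opNorm_le_of_le le_rfl hv |>.trans_eq (mul_one _)
  have hmeasure := MeasureTheory.measure_mono (μ := ν) himage
  rw [MeasureTheory.Measure.addHaar_image_continuousLinearMap,
    MeasureTheory.Measure.addHaar_closedBall' _ _ (norm_nonneg T),
    ENNReal.mul_le_mul_iff_left (measure_closedBall_pos _ _ one_pos).ne'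
      MeasureTheory.measure_closedBall_lt_top.ne,
    ENNReal.ofReal_le_ofReal_iff (by positivity)] at hmeasure
  exact hmeasure

theorem abs_det_le_norm_inverse_comp_pow_mul {B : E →L[ℝ] E} (hB : B.IsInvertible)
    (A : E →L[ℝ] E) :
    |A.det| ≤ ‖B.inverse ∘L A‖ ^ Module.finrank ℝ E * |B.det| := by
  calc |A.det| = |(B.inverse ∘L A).det| * |B.det| := by
        rw [← abs_mul, mul_comm, ← det_comp_eq_mul, comp_inverse_comp_self hB]
    _ ≤ ‖B.inverse ∘L A‖ ^ Module.finrank ℝ E * |B.det| := by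
        gcongr
        exact abs_det_le_norm_pow_finrank _

end Det

section IteratedComp

/-- The composition `f (n - 1) ∘ ⋯ ∘ f 0` of a sequence of self-maps. -/
def iteratedComp {X : Type*} (f : ℕ → X → X) : ℕ → X → X
  | 0 => id
  | n + 1 => f n ∘ iteratedComp f n

theorem mapsTo_iteratedComp {X : Type*} {f : ℕ → X → X} {s : Set X}
    (hf : ∀ i, MapsTo (f i) s s) (n : ℕ) : MapsTo (iteratedComp f n) s s := by
  induction n with
  | zero => exact mapsTo_id s
  | succ n ih => exact (hf n).comp ih

theorem lipschitzOnWith_iteratedComp {X : Type*} [PseudoEMetricSpace X] {f : ℕ → X → X}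
    {s : Set X} {K : ℝ≥0} (hmaps : ∀ i, MapsTo (f i) s s)
    (hlip : ∀ i, LipschitzOnWith K (f i) s) (n : ℕ) :
    LipschitzOnWith (K ^ n) (iteratedComp f n) s := by
  induction n with
  | zero =>
    rw [pow_zero]
    exact LipschitzWith.id.lipschitzOnWith
  | succ n ih =>
    rw [pow_succ']
    exact (hlip n).comp ih (mapsTo_iteratedComp hmaps n)

theorem hasFDerivAt_iteratedComp {𝕜 E : Type*} [NontriviallyNormedField 𝕜]
    [NormedAddCommGroup E] [NormedSpace 𝕜 E] {f : ℕ → E → E} {x : E}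
    (hf : ∀ i, DifferentiableAt 𝕜 (f i) (iteratedComp f i x)) (n : ℕ) :
    HasFDerivAt (iteratedComp f n)
      (operatorProd (fun i => fderiv 𝕜 (f i) (iteratedComp f i x)) n) x := by
  induction n with
  | zero => exact hasFDerivAt_id x
  | succ n ih => exact (hf n).hasFDerivAt.comp x ih

end IteratedComp

section Distortion

variable {E : Type*} [NormedAddCommGroup E] [NormedSpace ℝ E]

/-- The form of (H0)–(H3') for a sequence of self-maps of a set `s`, indexed from `0`: the
derivatives are uniformly `α`-Hölder on `s`, their norms lie in `[μ', μ]`, and their condition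
numbers are at most `κ`, where `κ μ ^ α < 1`. -/
structure BunchedContractions (f : ℕ → E → E) (s : Set E) (C α μ κ : ℝ≥0) (μ' : ℝ) : Prop where
  mapsTo : ∀ i, MapsTo (f i) s s
  differentiableAt : ∀ i, ∀ x ∈ s, DifferentiableAt ℝ (f i) x
  holderOnWith : ∀ i, HolderOnWith C α (fderiv ℝ (f i)) s
  le_norm : ∀ i, ∀ x ∈ s, μ' ≤ ‖fderiv ℝ (f i) x‖
  norm_le : ∀ i, ∀ x ∈ s, ‖fderiv ℝ (f i) x‖ ≤ μ
  isInvertible : ∀ i, ∀ x ∈ s, (fderiv ℝ (f i) x).IsInvertible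
  conditionNumber_le : ∀ i, ∀ x ∈ s, conditionNumber (fderiv ℝ (f i) x) ≤ κ
  exponent_pos : 0 < α
  lower_pos : 0 < μ'
  bunching : κ * μ ^ (α : ℝ) < 1

/-- The constant `M` in the estimate `‖Df^n(y)⁻¹ Df^n(x)‖ ≤ exp (M |x - y| ^ α)`: the sum over `i`
of `κ ^ i` (conjugation) times `κ / μ'` (norm of an inverse derivative) times `C (μ ^ α) ^ i`
(Hölder continuity along contracting orbits). -/
def distortionConst (C α μ κ : ℝ≥0) (μ' : ℝ) : ℝ :=
  κ / μ' * C * (1 - (κ : ℝ) * (μ : ℝ) ^ (α : ℝ))⁻¹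

namespace BunchedContractions

variable {f : ℕ → E → E} {s : Set E} {C α μ κ : ℝ≥0} {μ' : ℝ} {x y : E}

theorem nontrivial (h : BunchedContractions f s C α μ κ μ') (hx : x ∈ s) : Nontrivial E := by
  by_contra hE
  rw [not_nontrivial_iff_subsingleton] at hE
  have hnorm := h.le_norm 0 x hx
  rw [Subsingleton.elim (fderiv ℝ (f 0) x) 0, norm_zero] at hnorm
  exact hnorm.not_gt h.lower_pos

theorem distortionConst_nonneg (h : BunchedContractions f s C α μ κ μ') :
    0 ≤ distortionConst C α μ κ μ' := by
  have hlower := h.lower_pos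
  have hgap : 0 ≤ 1 - (κ : ℝ) * (μ : ℝ) ^ (α : ℝ) :=
    sub_nonneg.2 (by exact_mod_cast h.bunching.le)
  unfold distortionConst
  positivity

theorem fderiv_iteratedComp (h : BunchedContractions f s C α μ κ μ') (hx : x ∈ s) (n : ℕ) :
    fderiv ℝ (iteratedComp f n) x =
      operatorProd (fun i => fderiv ℝ (f i) (iteratedComp f i x)) n :=
  (hasFDerivAt_iteratedComp
    (fun i => h.differentiableAt i _ (mapsTo_iteratedComp h.mapsTo i hx)) n).fderiv

theorem isInvertible_fderiv_iteratedComp (h : BunchedContractions f s C α μ κ μ') (hx : x ∈ s)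
    (n : ℕ) : (fderiv ℝ (iteratedComp f n) x).IsInvertible := by
  rw [h.fderiv_iteratedComp hx]
  exact isInvertible_operatorProd
    (fun i => h.isInvertible i _ (mapsTo_iteratedComp h.mapsTo i hx)) n

theorem norm_inverse_fderiv_le (h : BunchedContractions f s C α μ κ μ') (hx : x ∈ s) (i : ℕ) :
    ‖(fderiv ℝ (f i) x).inverse‖ ≤ κ / μ' := by
  rw [le_div_iff₀' h.lower_pos]
  exact (mul_le_mul_of_nonneg_right (h.le_norm i x hx) (norm_nonneg _)).trans
    (h.conditionNumber_le i x hx)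

theorem norm_fderiv_sub_le (h : BunchedContractions f s C α μ κ μ') (hs : Convex ℝ s)
    (hx : x ∈ s) (hy : y ∈ s) (i : ℕ) :
    ‖fderiv ℝ (f i) (iteratedComp f i x) - fderiv ℝ (f i) (iteratedComp f i y)‖ ≤
      C * (μ ^ (α : ℝ)) ^ i * dist x y ^ (α : ℝ) := by
  have hlip : LipschitzOnWith (μ ^ i) (iteratedComp f i) s :=
    lipschitzOnWith_iteratedComp h.mapsTo
      (fun j => hs.lipschitzOnWith_of_nnnorm_fderiv_le (h.differentiableAt j) (h.norm_le j)) i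
  have hholder := ((h.holderOnWith i).comp (holderOnWith_one.2 hlip)
    (mapsTo_iteratedComp h.mapsTo i)).dist_le hx hy
  rw [dist_eq_norm, mul_one, ← NNReal.rpow_natCast_mul, mul_comm (i : ℝ), NNReal.rpow_mul_natCast]
    at hholder
  exact_mod_cast hholder

theorem norm_inverse_comp_fderiv_le (h : BunchedContractions f s C α μ κ μ') (hs : Convex ℝ s)
    (hx : x ∈ s) (hy : y ∈ s) (n : ℕ) :
    ‖(fderiv ℝ (iteratedComp f n) y).inverse ∘L fderiv ℝ (iteratedComp f n) x‖ ≤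
      Real.exp (distortionConst C α μ κ μ' * dist x y ^ (α : ℝ)) := by
  have hlower := h.lower_pos
  have horbit : ∀ i, iteratedComp f i y ∈ s := fun i => mapsTo_iteratedComp h.mapsTo i hy
  have hinv := fun i => h.isInvertible i _ (horbit i)
  rw [h.fderiv_iteratedComp hx, h.fderiv_iteratedComp hy]
  refine (norm_inverse_comp_operatorProd_le hinv _ n).trans (Real.exp_le_exp.2 ?_)
  set D : ℝ := dist x y ^ (α : ℝ)
  set θ : ℝ≥0 := κ * μ ^ (α : ℝ) with hθ
  calc ∑ i ∈ range n, _ * (_ * _)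
      ≤ ∑ i ∈ range n, (κ : ℝ) ^ i * (κ / μ' * (C * (μ ^ (α : ℝ)) ^ i * D)) := by
        gcongr with i
        · exact conditionNumber_operatorProd_le hinv
            (fun j => h.conditionNumber_le j _ (horbit j)) i
        · exact h.norm_inverse_fderiv_le (horbit i) i
        · exact h.norm_fderiv_sub_le hs hx hy i
    _ = κ / μ' * C * (∑ i ∈ range n, (θ : ℝ) ^ i) * D := by
        rw [mul_sum, sum_mul]
        refine sum_congr rfl fun i _ => ?_
        rw [hθ, NNReal.coe_mul, mul_pow, NNReal.coe_rpow]
        ring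
    _ ≤ κ / μ' * C * (1 - θ : ℝ)⁻¹ * D := by
        gcongr
        exact sum_le_hasSum _ (fun i _ => by positivity)
          (hasSum_geometric_of_lt_one θ.coe_nonneg (by exact_mod_cast h.bunching))
    _ = distortionConst C α μ κ μ' * D := by
        rw [distortionConst, hθ, NNReal.coe_mul, NNReal.coe_rpow]

theorem norm_ratio_mem_Icc (h : BunchedContractions f s C α μ κ μ') (hs : Convex ℝ s)
    (hx : x ∈ s) (hy : y ∈ s) (n : ℕ) :
    ‖fderiv ℝ (iteratedComp f n) x‖ / ‖fderiv ℝ (iteratedComp f n) y‖ ∈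
      Icc (Real.exp (-(distortionConst C α μ κ μ' * dist x y ^ (α : ℝ))))
        (Real.exp (distortionConst C α μ κ μ' * dist x y ^ (α : ℝ))) := by
  have := h.nontrivial hx
  have hle : ∀ {x y : E}, x ∈ s → y ∈ s → ‖fderiv ℝ (iteratedComp f n) x‖ ≤
      Real.exp (distortionConst C α μ κ μ' * dist x y ^ (α : ℝ)) *
        ‖fderiv ℝ (iteratedComp f n) y‖ := fun hx hy =>
    (norm_le_norm_inverse_comp_mul_norm (h.isInvertible_fderiv_iteratedComp hy n) _).trans
      (mul_le_mul_of_nonneg_right (h.norm_inverse_comp_fderiv_le hs hx hy n) (norm_nonneg _))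
  have hpos : 0 < ‖fderiv ℝ (iteratedComp f n) y‖ := by
    obtain ⟨e, he⟩ := h.isInvertible_fderiv_iteratedComp hy n
    exact he ▸ e.norm_pos
  exact div_mem_Icc_exp hpos (hle hx hy) (dist_comm x y ▸ hle hy hx)

theorem operatorConorm_ratio_mem_Icc (h : BunchedContractions f s C α μ κ μ') (hs : Convex ℝ s)
    (hx : x ∈ s) (hy : y ∈ s) (n : ℕ) :
    operatorConorm (fderiv ℝ (iteratedComp f n) x) /
        operatorConorm (fderiv ℝ (iteratedComp f n) y) ∈
      Icc (Real.exp (-(distortionConst C α μ κ μ' * dist x y ^ (α : ℝ))))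
        (Real.exp (distortionConst C α μ κ μ' * dist x y ^ (α : ℝ))) := by
  have := h.nontrivial hx
  have hinv : ∀ {z : E}, z ∈ s → (fderiv ℝ (iteratedComp f n) z).IsInvertible :=
    fun hz => h.isInvertible_fderiv_iteratedComp hz n
  have hle : ∀ {x y : E}, x ∈ s → y ∈ s → operatorConorm (fderiv ℝ (iteratedComp f n) x) ≤
      Real.exp (distortionConst C α μ κ μ' * dist x y ^ (α : ℝ)) *
        operatorConorm (fderiv ℝ (iteratedComp f n) y) := fun hx hy =>
    (operatorConorm_le_norm_inverse_comp_mul (hinv hx) (hinv hy)).trans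
      (mul_le_mul_of_nonneg_right (h.norm_inverse_comp_fderiv_le hs hx hy n)
        (operatorConorm_pos (hinv hy)).le)
  exact div_mem_Icc_exp (operatorConorm_pos (hinv hy)) (hle hx hy) (dist_comm x y ▸ hle hy hx)

theorem det_ratio_pos (h : BunchedContractions f s C α μ κ μ') (hs : IsPreconnected s)
    (hx : x ∈ s) (hy : y ∈ s) (n : ℕ) :
    0 < (fderiv ℝ (iteratedComp f n) x).det / (fderiv ℝ (iteratedComp f n) y).det := by
  rw [h.fderiv_iteratedComp hx, h.fderiv_iteratedComp hy, det_operatorProd, det_operatorProd,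
    ← prod_div_distrib]
  refine prod_pos fun i _ => ?_
  have hcont : ContinuousOn (fun z => (fderiv ℝ (f i) z).det) s :=
    ContinuousLinearMap.continuous_det.comp_continuousOn
      ((h.holderOnWith i).continuousOn h.exponent_pos)
  exact div_pos_of_continuousOn_of_isPreconnected hs hcont
    (fun z hz => det_ne_zero_of_isInvertible (h.isInvertible i z hz))
    (mapsTo_iteratedComp h.mapsTo i hx) (mapsTo_iteratedComp h.mapsTo i hy)

theorem det_ratio_mem_Icc [FiniteDimensional ℝ E] (h : BunchedContractions f s C α μ κ μ')
    (hs : Convex ℝ s) (hx : x ∈ s) (hy : y ∈ s) (n : ℕ) :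
    (fderiv ℝ (iteratedComp f n) x).det / (fderiv ℝ (iteratedComp f n) y).det ∈
      Icc (Real.exp (-(Module.finrank ℝ E * (distortionConst C α μ κ μ' * dist x y ^ (α : ℝ)))))
        (Real.exp (Module.finrank ℝ E * (distortionConst C α μ κ μ' * dist x y ^ (α : ℝ)))) := by
  have hle : ∀ {x y : E}, x ∈ s → y ∈ s → |(fderiv ℝ (iteratedComp f n) x).det| ≤
      Real.exp (Module.finrank ℝ E * (distortionConst C α μ κ μ' * dist x y ^ (α : ℝ))) *
        |(fderiv ℝ (iteratedComp f n) y).det| := fun hx hy => by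
    refine (abs_det_le_norm_inverse_comp_pow_mul
      (h.isInvertible_fderiv_iteratedComp hy n) _).trans ?_
    rw [Real.exp_nat_mul]
    gcongr
    exact h.norm_inverse_comp_fderiv_le hs hx hy n
  have hpos : 0 < |(fderiv ℝ (iteratedComp f n) y).det| :=
    abs_pos.2 (det_ne_zero_of_isInvertible (h.isInvertible_fderiv_iteratedComp hy n))
  rw [← abs_of_pos (h.det_ratio_pos hs.isPreconnected hx hy n), abs_div]
  exact div_mem_Icc_exp hpos (hle hx hy) (dist_comm x y ▸ hle hy hx)

theorem exists_ratios_mem_Icc [FiniteDimensional ℝ E] (h : BunchedContractions f s C α μ κ μ')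
    (hs : Convex ℝ s) :
    ∃ M ≥ 0, ∀ x ∈ s, ∀ y ∈ s, ∀ n : ℕ,
      let I := Icc (Real.exp (-(M * dist x y ^ (α : ℝ)))) (Real.exp (M * dist x y ^ (α : ℝ)))
      ‖fderiv ℝ (iteratedComp f n) x‖ / ‖fderiv ℝ (iteratedComp f n) y‖ ∈ I ∧
        operatorConorm (fderiv ℝ (iteratedComp f n) x) /
          operatorConorm (fderiv ℝ (iteratedComp f n) y) ∈ I ∧
        (fderiv ℝ (iteratedComp f n) x).det / (fderiv ℝ (iteratedComp f n) y).det ∈ I := by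
  have hM := h.distortionConst_nonneg
  refine ⟨Module.finrank ℝ E * distortionConst C α μ κ μ', by positivity, ?_⟩
  intro x hx y hy n I
  have := h.nontrivial hx
  have hfinrank : (1 : ℝ) ≤ Module.finrank ℝ E := by exact_mod_cast Module.finrank_pos
  have hsubset : Icc (Real.exp (-(distortionConst C α μ κ μ' * dist x y ^ (α : ℝ))))
      (Real.exp (distortionConst C α μ κ μ' * dist x y ^ (α : ℝ))) ⊆ I := by
    have hle := le_mul_of_one_le_left hM hfinrank
    apply Set.Icc_subset_Icc <;> gcongr
  refine ⟨hsubset (h.norm_ratio_mem_Icc hs hx hy n),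
    hsubset (h.operatorConorm_ratio_mem_Icc hs hx hy n), ?_⟩
  simpa only [I, mul_assoc] using h.det_ratio_mem_Icc hs hx hy n

end BunchedContractions

theorem mapsTo_ball_of_norm_fderiv_le_one {f : E → E} {ρ : ℝ} (hfix : f 0 = 0)
    (hdiff : ∀ x ∈ ball (0 : E) ρ, DifferentiableAt ℝ f x)
    (hnorm : ∀ x ∈ ball (0 : E) ρ, ‖fderiv ℝ f x‖ ≤ 1) : MapsTo f (ball 0 ρ) (ball 0 ρ) := by
  intro x hx
  have hnorm_le := (convex_ball (0 : E) ρ).norm_image_sub_le_of_norm_fderiv_le hdiff hnorm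
    (mem_ball_self (pos_of_mem_ball hx)) hx
  rw [hfix, sub_zero, sub_zero, one_mul] at hnorm_le
  rw [mem_ball_zero_iff] at hx ⊢
  exact hnorm_le.trans_lt hx

theorem bunchedContractions_ball {f : ℕ → E → E} {ρ μ' : ℝ} {C α μ κ : ℝ≥0}
    (hα : 0 < α) (hμ' : 0 < μ') (hμ : μ ≤ 1) (hbunch : κ * μ ^ (α : ℝ) < 1)
    (hfix : ∀ i, f i 0 = 0) (hdiff : ∀ i, ∀ x ∈ ball (0 : E) ρ, DifferentiableAt ℝ (f i) x)
    (hholder : ∀ i, ∀ x ∈ ball (0 : E) ρ, ∀ y ∈ ball (0 : E) ρ,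
      ‖fderiv ℝ (f i) x - fderiv ℝ (f i) y‖ ≤ C * ‖x - y‖ ^ (α : ℝ))
    (hnorm : ∀ i, ∀ x ∈ ball (0 : E) ρ, μ' < ‖fderiv ℝ (f i) x‖ ∧ ‖fderiv ℝ (f i) x‖ < μ)
    (hequiv : ∀ i, ∀ x ∈ ball (0 : E) ρ, ∃ A : E ≃L[ℝ] E,
      fderiv ℝ (f i) x = A ∧ ‖(A : E →L[ℝ] E)‖ * ‖(A.symm : E →L[ℝ] E)‖ ≤ κ) :
    BunchedContractions f (ball 0 ρ) C α μ κ μ' where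
  mapsTo i := mapsTo_ball_of_norm_fderiv_le_one (hfix i) (hdiff i)
    fun x hx => (hnorm i x hx).2.le.trans hμ
  differentiableAt := hdiff
  holderOnWith i := holderOnWith_of_dist_le <| by simpa only [dist_eq_norm] using hholder i
  le_norm i x hx := (hnorm i x hx).1.le
  norm_le i x hx := (hnorm i x hx).2.le
  isInvertible i x hx := by
    obtain ⟨A, hA, -⟩ := hequiv i x hx
    exact ⟨A, hA.symm⟩
  conditionNumber_le i x hx := by
    obtain ⟨A, hA, hκ⟩ := hequiv i x hx
    rwa [conditionNumber, hA, ContinuousLinearMap.inverse_equiv]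
  exponent_pos := hα
  lower_pos := hμ'
  bunching := hbunch

theorem strong_bounded_distortion_general [FiniteDimensional ℝ E] {f : ℕ → E → E} {s : Set E}
    {C₀ α μ κ : ℝ≥0} {μ' : ℝ} (hs : Convex ℝ s) (hbdd : Bornology.IsBounded s)
    (h : BunchedContractions f s C₀ α μ κ μ') :
    ∃ C > (1 : ℝ),
      (∀ x ∈ s, ∀ y ∈ s, ∀ n : ℕ,
        ‖fderiv ℝ (iteratedComp f n) x‖ / ‖fderiv ℝ (iteratedComp f n) y‖ ∈ Ioo C⁻¹ C ∧
        operatorConorm (fderiv ℝ (iteratedComp f n) x) /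
          operatorConorm (fderiv ℝ (iteratedComp f n) y) ∈ Ioo C⁻¹ C ∧
        (fderiv ℝ (iteratedComp f n) x).det / (fderiv ℝ (iteratedComp f n) y).det ∈ Ioo C⁻¹ C) ∧
      (∀ ε > (0 : ℝ), ∃ δ > (0 : ℝ), ∀ x ∈ s, ∀ y ∈ s, dist x y < δ → ∀ n : ℕ,
        |‖fderiv ℝ (iteratedComp f n) x‖ / ‖fderiv ℝ (iteratedComp f n) y‖ - 1| ≤ ε ∧
        |operatorConorm (fderiv ℝ (iteratedComp f n) x) /
          operatorConorm (fderiv ℝ (iteratedComp f n) y) - 1| ≤ ε ∧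
        |(fderiv ℝ (iteratedComp f n) x).det / (fderiv ℝ (iteratedComp f n) y).det - 1| ≤ ε) := by
  obtain ⟨M, hM, hratios⟩ := h.exists_ratios_mem_Icc hs
  refine ⟨Real.exp (M * diam s ^ (α : ℝ) + 1), Real.one_lt_exp_iff.2 (by positivity), ?_, ?_⟩
  · intro x hx y hy n
    have hlt : M * dist x y ^ (α : ℝ) < M * diam s ^ (α : ℝ) + 1 := by
      have hdist := dist_le_diam_of_mem hbdd hx hy
      exact lt_add_of_le_of_pos (by gcongr) one_pos
    obtain ⟨hnorm, hconorm, hdet⟩ := hratios x hx y hy n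
    exact ⟨mem_Ioo_exp_of_mem_Icc_exp hnorm hlt, mem_Ioo_exp_of_mem_Icc_exp hconorm hlt,
      mem_Ioo_exp_of_mem_Icc_exp hdet hlt⟩
  · intro ε hε
    obtain ⟨δ, hδ, hsmall⟩ := exists_pos_forall_exp_mul_rpow_sub_one_le M h.exponent_pos hε
    refine ⟨δ, hδ, fun x hx y hy hxy n => ?_⟩
    have hle := hsmall (dist x y) dist_nonneg hxy
    obtain ⟨hnorm, hconorm, hdet⟩ := hratios x hx y hy n
    exact ⟨(abs_sub_one_le_exp_sub_one hnorm).trans hle,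
      (abs_sub_one_le_exp_sub_one hconorm).trans hle,
      (abs_sub_one_le_exp_sub_one hdet).trans hle⟩

end Distortion

theorem comps_eq_iteratedComp (f : ℕ → EuclideanSpace ℝ (Fin d) → EuclideanSpace ℝ (Fin d))
    (n : ℕ) : comps f n = iteratedComp (fun i => f (i + 1)) n := by
  induction n with
  | zero => rfl
  | succ n ih => rw [comps, iteratedComp, ih]

/-- **Strong bounded distortion** (Theorem 4.4): under hypotheses (H0)–(H3') (with the
bunching condition at every point of the ball), there is `C > 1` such that for all
`x, y ∈ B_ρ(0)` and all `n ≥ 1` the ratios `‖Df^n(x)‖/‖Df^n(y)‖`, `m(Df^n(x))/m(Df^n(y))`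
and `det Df^n(x)/det Df^n(y)` lie in `(C⁻¹, C)`; moreover the ratios tend to `1` as
`|x − y| → 0`, uniformly in `n`. -/
theorem strong_bounded_distortion
    (hd : 0 < d) (ρ C₀ μ' μ α κ : ℝ) (hρ : 0 < ρ) (hC₀ : 0 < C₀)
    (hμ'0 : 0 < μ') (hμ'μ : μ' < μ) (hμ1 : μ < 1)
    (hα0 : 0 < α) (hα1 : α < 1) (hκ1 : 1 ≤ κ) (hbunch : κ * μ ^ α < 1)
    (f : ℕ → EuclideanSpace ℝ (Fin d) → EuclideanSpace ℝ (Fin d))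
    (h0fix : ∀ i, 1 ≤ i → f i 0 = 0)
    (h0inj : ∀ i, 1 ≤ i → InjOn (f i) (ball 0 ρ))
    (h0diff : ∀ i, 1 ≤ i → ∀ x ∈ ball (0 : EuclideanSpace ℝ (Fin d)) ρ,
      DifferentiableAt ℝ (f i) x)
    (h1 : ∀ i, 1 ≤ i → ∀ x ∈ ball (0 : EuclideanSpace ℝ (Fin d)) ρ,
      ‖f i x‖ + ‖fderiv ℝ (f i) x‖ ≤ C₀)
    (h1Hol : ∀ i, 1 ≤ i → ∀ x ∈ ball (0 : EuclideanSpace ℝ (Fin d)) ρ,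
      ∀ y ∈ ball (0 : EuclideanSpace ℝ (Fin d)) ρ,
        ‖fderiv ℝ (f i) x - fderiv ℝ (f i) y‖ ≤ C₀ * ‖x - y‖ ^ α)
    (h2 : ∀ i, 1 ≤ i → ∀ y ∈ ball (0 : EuclideanSpace ℝ (Fin d)) ρ,
      μ' < ‖fderiv ℝ (f i) y‖ ∧ ‖fderiv ℝ (f i) y‖ < μ)
    (h3 : ∀ i, 1 ≤ i → ∀ x ∈ ball (0 : EuclideanSpace ℝ (Fin d)) ρ,
      ∃ A : EuclideanSpace ℝ (Fin d) ≃L[ℝ] EuclideanSpace ℝ (Fin d),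
        fderiv ℝ (f i) x =
          (A : EuclideanSpace ℝ (Fin d) →L[ℝ] EuclideanSpace ℝ (Fin d)) ∧
        ‖(A : EuclideanSpace ℝ (Fin d) →L[ℝ] EuclideanSpace ℝ (Fin d))‖ *
          ‖(A.symm : EuclideanSpace ℝ (Fin d) →L[ℝ] EuclideanSpace ℝ (Fin d))‖ ≤ κ) :
    ∃ C > (1 : ℝ),
      (∀ x ∈ ball (0 : EuclideanSpace ℝ (Fin d)) ρ,
       ∀ y ∈ ball (0 : EuclideanSpace ℝ (Fin d)) ρ, ∀ n : ℕ, 1 ≤ n →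
        (C⁻¹ < ‖fderiv ℝ (comps f n) x‖ / ‖fderiv ℝ (comps f n) y‖ ∧
          ‖fderiv ℝ (comps f n) x‖ / ‖fderiv ℝ (comps f n) y‖ < C) ∧
        (C⁻¹ < conorm (fderiv ℝ (comps f n) x) / conorm (fderiv ℝ (comps f n) y) ∧
          conorm (fderiv ℝ (comps f n) x) / conorm (fderiv ℝ (comps f n) y) < C) ∧
        (C⁻¹ < LinearMap.det ((fderiv ℝ (comps f n) x :
              EuclideanSpace ℝ (Fin d) →ₗ[ℝ] EuclideanSpace ℝ (Fin d))) /
            LinearMap.det ((fderiv ℝ (comps f n) y :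
              EuclideanSpace ℝ (Fin d) →ₗ[ℝ] EuclideanSpace ℝ (Fin d))) ∧
          LinearMap.det ((fderiv ℝ (comps f n) x :
              EuclideanSpace ℝ (Fin d) →ₗ[ℝ] EuclideanSpace ℝ (Fin d))) /
            LinearMap.det ((fderiv ℝ (comps f n) y :
              EuclideanSpace ℝ (Fin d) →ₗ[ℝ] EuclideanSpace ℝ (Fin d))) < C)) ∧
      (∀ ε > (0 : ℝ), ∃ δ > (0 : ℝ),
        ∀ x ∈ ball (0 : EuclideanSpace ℝ (Fin d)) ρ,
        ∀ y ∈ ball (0 : EuclideanSpace ℝ (Fin d)) ρ, dist x y < δ → ∀ n : ℕ, 1 ≤ n →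
          |‖fderiv ℝ (comps f n) x‖ / ‖fderiv ℝ (comps f n) y‖ - 1| ≤ ε ∧
          |conorm (fderiv ℝ (comps f n) x) / conorm (fderiv ℝ (comps f n) y) - 1| ≤ ε ∧
          |LinearMap.det ((fderiv ℝ (comps f n) x :
              EuclideanSpace ℝ (Fin d) →ₗ[ℝ] EuclideanSpace ℝ (Fin d))) /
            LinearMap.det ((fderiv ℝ (comps f n) y :
              EuclideanSpace ℝ (Fin d) →ₗ[ℝ] EuclideanSpace ℝ (Fin d))) - 1| ≤ ε) := by
  lift C₀ to ℝ≥0 using hC₀.le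
  lift α to ℝ≥0 using hα0.le
  lift μ to ℝ≥0 using (hμ'0.trans hμ'μ).le
  lift κ to ℝ≥0 using zero_le_one.trans hκ1
  have h : BunchedContractions (fun i => f (i + 1)) (ball 0 ρ) C₀ α μ κ μ' :=
    bunchedContractions_ball (by exact_mod_cast hα0) hμ'0 (by exact_mod_cast hμ1.le)
      (by exact_mod_cast hbunch) (fun i => h0fix _ i.succ_pos) (fun i => h0diff _ i.succ_pos)
      (fun i => h1Hol _ i.succ_pos) (fun i => h2 _ i.succ_pos) (fun i => h3 _ i.succ_pos)
  obtain ⟨C, hC, hbounded, huniform⟩ :=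
    strong_bounded_distortion_general (convex_ball 0 ρ) isBounded_ball h
  simp only [comps_eq_iteratedComp]
  refine ⟨C, hC, fun x hx y hy n _ => hbounded x hx y hy n, fun ε hε => ?_⟩
  obtain ⟨δ, hδ, hclose⟩ := huniform ε hε
  exact ⟨δ, hδ, fun x hx y hy hxy n _ => hclose x hx y hy hxy n⟩

end
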